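/- Let ξ = e^{2πi/3}, Γ₁ = ℤ[ξ] the hexagonal lattice, and Γ₂ = ⟨u, v⟩_ℤ for ℝ-linearly independent u, v ∈ ℤ[ξ]. If Im_h(u·conj(v)) divides each of N(u), N(v), and Re_h(u·conj(v)), but divides none of Im_h(u²), Im_h(v²), and Im_h(uv), then the point group of the color group H of the coloring of Γ₁ determined by Γ₂ is the cyclic group of order 6 generated by the 60°-rotation z ↦ e^{iπ/3}z (so the color group is of type p6). -/

import Mathlib

open Complex

/-- A symmetry `h` of the plane (identified with `ℂ`) is a *color symmetry* of the
coloring of `Γ₁` determined by its subgroup `Γ₂` (each coset of `Γ₂` is one color) if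
there is a permutation `σ` of the colors with `c (h ℓ) = σ (c ℓ)` for all `ℓ ∈ Γ₁`. -/
def IsColorSymmetry (Γ₁ Γ₂ : AddSubgroup ℂ) (h : ℂ → ℂ) : Prop :=
  ∃ σ : Equiv.Perm (ℂ ⧸ Γ₂), ∀ ℓ ∈ Γ₁,
    (QuotientAddGroup.mk (h ℓ) : ℂ ⧸ Γ₂) = σ (QuotientAddGroup.mk ℓ)

/-- The point group `P(H)` of the color group `H` of the coloring of `Γ₁` determined by
`Γ₂`: all isometries of the plane fixing the origin, mapping `Γ₁` onto itself, and
permuting the colors. -/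
def pointColorGroup (Γ₁ Γ₂ : AddSubgroup ℂ) : Set (ℂ → ℂ) :=
  {g | Isometry g ∧ Function.Surjective g ∧ g 0 = 0 ∧
    g '' (Γ₁ : Set ℂ) = Γ₁ ∧ IsColorSymmetry Γ₁ Γ₂ g}

/-!
An origin-fixing symmetry permutes the colors iff it preserves `Γ₂`, and a linear isometry
preserving `ℤ[ξ]` is multiplication by a sixth root of unity `(1 + ξ) ^ k`, possibly after a
conjugation. By Cramer's rule for the alternating form `Im (z * conj w)`, a point `z` lies in
`⟨u, v⟩_ℤ` iff `Im_h (u * conj v)` divides `Im_h (z * conj u)` and `Im_h (z * conj v)`. Applied to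
`z = (1 + ξ) u, (1 + ξ) v` this gives the three divisibilities that make `Γ₂` invariant under the
rotation; applied to `z = conj u, conj v` it shows that `Γ₂` is invariant under conjugation only
if `Im_h (u * conj v)` divides all of `Im_h (u²)`, `Im_h (v²)` and `Im_h (uv)`.
-/

open scoped ComplexConjugate

lemma isColorSymmetry_iff_forall_mem_iff {Γ₁ Γ₂ : AddSubgroup ℂ} (hΓ : Γ₂ ≤ Γ₁) (f : ℂ ≃+ ℂ)
    (hf : ∀ z, f z ∈ Γ₁ ↔ z ∈ Γ₁) :
    IsColorSymmetry Γ₁ Γ₂ f ↔ ∀ z, f z ∈ Γ₂ ↔ z ∈ Γ₂ := by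
  constructor
  · rintro ⟨σ, hσ⟩ z
    have hσ_zero : σ 0 = 0 := by simpa using (hσ 0 Γ₁.zero_mem).symm
    by_cases hz : z ∈ Γ₁
    · rw [← QuotientAddGroup.eq_zero_iff, hσ z hz, ← QuotientAddGroup.eq_zero_iff z]
      exact σ.injective.eq_iff' hσ_zero
    · exact iff_of_false (fun h => hz ((hf z).1 (hΓ h))) fun h => hz (hΓ h)
  · intro h
    refine ⟨Quotient.congr f.toEquiv fun x y => ?_, fun _ _ => rfl⟩
    rw [QuotientAddGroup.leftRel_apply, QuotientAddGroup.leftRel_apply, ← h, map_add, map_neg]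
    rfl

theorem mem_pointColorGroup_iff {Γ₁ Γ₂ : AddSubgroup ℂ} (hΓ : Γ₂ ≤ Γ₁) {g : ℂ → ℂ} :
    g ∈ pointColorGroup Γ₁ Γ₂ ↔ ∃ f : ℂ ≃ₗᵢ[ℝ] ℂ,
      g = f ∧ (∀ z, f z ∈ Γ₁ ↔ z ∈ Γ₁) ∧ ∀ z, f z ∈ Γ₂ ↔ z ∈ Γ₂ := by
  constructor
  · rintro ⟨hiso, hsurj, hzero, himage, hcolor⟩
    let f : ℂ ≃ₗᵢ[ℝ] ℂ := IsometryEquiv.toRealLinearIsometryEquivOfMapZero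
      ⟨Equiv.ofBijective g ⟨hiso.injective, hsurj⟩, hiso⟩ hzero
    have hf₁ (z : ℂ) : f z ∈ Γ₁ ↔ z ∈ Γ₁ := by
      rw [← SetLike.mem_coe, ← himage]
      exact hiso.injective.mem_set_image
    exact ⟨f, rfl, hf₁,
      (isColorSymmetry_iff_forall_mem_iff hΓ f.toLinearEquiv.toAddEquiv hf₁).1 hcolor⟩
  · rintro ⟨f, rfl, hf₁, hf₂⟩
    refine ⟨f.isometry, f.surjective, map_zero f, ?_,
      (isColorSymmetry_iff_forall_mem_iff hΓ f.toLinearEquiv.toAddEquiv hf₁).2 hf₂⟩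
    have hpreimage : f ⁻¹' (Γ₁ : Set ℂ) = Γ₁ := Set.ext hf₁
    rw [← hpreimage, f.surjective.image_preimage, hpreimage]

lemma forall_mem_closure_pair_iff {G H : Type*} [AddGroup G] [AddGroup H] (f : G →+ H)
    (Γ : AddSubgroup H) (u v : G) :
    (∀ z ∈ AddSubgroup.closure {u, v}, f z ∈ Γ) ↔ f u ∈ Γ ∧ f v ∈ Γ := by
  change AddSubgroup.closure {u, v} ≤ Γ.comap f ↔ _
  rw [AddSubgroup.closure_le, Set.pair_subset_iff]
  rfl

lemma pow_mul_mem_iff {R : Type*} [Ring R] {Γ : AddSubgroup R} {c : R} {n : ℕ}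
    (hn : n ≠ 0) (hc : c ^ n = 1) (hΓ : ∀ z ∈ Γ, c * z ∈ Γ) (k : ℕ) (z : R) :
    c ^ k * z ∈ Γ ↔ z ∈ Γ := by
  have hpow (j : ℕ) {w : R} (hw : w ∈ Γ) : c ^ j * w ∈ Γ := by
    induction j with
    | zero => simpa using hw
    | succ j ih => rw [pow_succ', mul_assoc]; exact hΓ _ ih
  refine ⟨fun h => ?_, hpow k⟩
  have hinv : c ^ (k * (n - 1)) * (c ^ k * z) = z := by
    rw [← mul_assoc, ← pow_add, ← Nat.mul_succ, Nat.succ_eq_add_one,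
      Nat.sub_add_cancel (Nat.one_le_iff_ne_zero.2 hn), mul_comm k, pow_mul, hc, one_pow, one_mul]
  exact hinv ▸ hpow _ h

/-- Cramer's rule for the alternating form `(z, w) ↦ Im (z * conj w)`. -/
lemma im_mul_conj_mul_eq (u v z : ℂ) :
    ((u * conj v).im : ℂ) * z = (z * conj v).im * u - (z * conj u).im * v := by
  apply Complex.ext <;> simp <;> ring

lemma mem_closure_pair_iff_dvd {u v z : ℂ} {t : ℝ} {d k l : ℤ} (ht : t ≠ 0) (hd : d ≠ 0)
    (huv : (u * conj v).im = d * t) (hzv : (z * conj v).im = k * t)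
    (hzu : (z * conj u).im = l * t) :
    z ∈ AddSubgroup.closure {u, v} ↔ d ∣ k ∧ d ∣ l := by
  have hvu : (v * conj u).im = -(d * t) := by
    rw [← huv, ← conj_im, map_mul, conj_conj, mul_comm]
  rw [AddSubgroup.mem_closure_pair]
  constructor
  · rintro ⟨m, n, rfl⟩
    have him (w : ℂ) : ((m • u + n • v) * w).im = m * (u * w).im + n * (v * w).im := by
      simp [add_mul, mul_assoc]
    rw [him, huv, mul_conj, ofReal_im] at hzv
    rw [him, hvu, mul_conj, ofReal_im] at hzu
    have hk : (k : ℝ) = (d * m : ℤ) := by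
      apply mul_right_cancel₀ ht
      push_cast
      linear_combination -hzv
    have hl : (l : ℝ) = (d * -n : ℤ) := by
      apply mul_right_cancel₀ ht
      push_cast
      linear_combination -hzu
    exact ⟨⟨m, Int.cast_injective hk⟩, ⟨-n, Int.cast_injective hl⟩⟩
  · rintro ⟨⟨m, rfl⟩, ⟨n, rfl⟩⟩
    refine ⟨m, -n, ?_⟩
    have hcramer := im_mul_conj_mul_eq u v z
    rw [huv, hzv, hzu] at hcramer
    push_cast at hcramer
    have hdt : (d : ℂ) * t ≠ 0 := mul_ne_zero (mod_cast hd) (mod_cast ht)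
    apply mul_left_cancel₀ hdt
    simp only [zsmul_eq_mul, Int.cast_neg]
    linear_combination -hcramer

lemma forall_conj_mem_closure_pair_iff_dvd {u v : ℂ} {t : ℝ} {p q r s : ℤ} (ht : t ≠ 0)
    (hp₀ : p ≠ 0) (hp : (u * conj v).im = p * t) (hq : (u ^ 2).im = q * t)
    (hr : (v ^ 2).im = r * t) (hs : (u * v).im = s * t) :
    (∀ z ∈ AddSubgroup.closure {u, v}, conj z ∈ AddSubgroup.closure {u, v}) ↔
      p ∣ q ∧ p ∣ r ∧ p ∣ s := by
  have hconj {x y : ℂ} {n : ℤ} (h : (x * y).im = n * t) :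
      (conj x * conj y).im = (-n : ℤ) * t := by
    rw [← map_mul, conj_im, h]; push_cast; ring
  have hu : conj u ∈ AddSubgroup.closure {u, v} ↔ p ∣ -s ∧ p ∣ -q :=
    mem_closure_pair_iff_dvd ht hp₀ hp (hconj hs) (hconj (sq u ▸ hq))
  have hv : conj v ∈ AddSubgroup.closure {u, v} ↔ p ∣ -r ∧ p ∣ -s :=
    mem_closure_pair_iff_dvd ht hp₀ hp (hconj (sq v ▸ hr)) (hconj (mul_comm u v ▸ hs))
  have hpair := forall_mem_closure_pair_iff (conj : ℂ →+* ℂ).toAddMonoidHom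
    (AddSubgroup.closure {u, v}) u v
  refine hpair.trans ((and_congr hu hv).trans ?_)
  simp only [dvd_neg]
  tauto

lemma isPrimitiveRoot_exp_pi_mul_I_div_three :
    IsPrimitiveRoot (exp ((Real.pi : ℂ) * I / 3)) 6 := by
  convert isPrimitiveRoot_exp 6 (by norm_num) using 2
  push_cast
  ring

lemma exp_pi_mul_I_div_three_sq :
    exp ((Real.pi : ℂ) * I / 3) ^ 2 = exp (2 * (Real.pi : ℂ) * I / 3) := by
  rw [← exp_nat_mul]
  push_cast
  ring_nf

lemma eq_one_add_sq_of_isPrimitiveRoot_six {R : Type*} [CommRing R] [IsDomain R] {ζ : R}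
    (hζ : IsPrimitiveRoot ζ 6) : ζ = 1 + ζ ^ 2 := by
  have hcube : ζ ^ 3 = -1 :=
    (hζ.pow (by norm_num) (show 6 = 3 * 2 by rfl)).eq_neg_one_of_two_right
  have hne : ζ + 1 ≠ 0 := by
    intro h
    refine hζ.pow_ne_one_of_pos_of_lt (l := 2) (by norm_num) (by norm_num) ?_
    linear_combination (ζ - 1) * h
  apply mul_left_cancel₀ hne
  linear_combination -hcube

lemma eq_of_sq_sub_mul_add_sq_eq_one {m n : ℤ} (h : m ^ 2 - m * n + n ^ 2 = 1) :
    (m = 1 ∧ n = 0) ∨ (m = 1 ∧ n = 1) ∨ (m = 0 ∧ n = 1) ∨ (m = -1 ∧ n = 0) ∨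
      (m = -1 ∧ n = -1) ∨ (m = 0 ∧ n = -1) := by
  have hm : m ^ 2 ≤ 1 := by nlinarith [sq_nonneg (m - 2 * n)]
  have hn : n ^ 2 ≤ 1 := by nlinarith [sq_nonneg (n - 2 * m)]
  obtain ⟨hm₁, hm₂⟩ := abs_le.1 (sq_le_one_iff_abs_le_one m |>.1 hm)
  obtain ⟨hn₁, hn₂⟩ := abs_le.1 (sq_le_one_iff_abs_le_one n |>.1 hn)
  interval_cases m <;> interval_cases n <;> simp_all

section CubeRoot

variable {ξ : ℂ} (hξ : IsPrimitiveRoot ξ 3)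
include hξ

lemma sq_eq_of_isPrimitiveRoot_three : ξ ^ 2 = -1 - ξ := by
  have hsum := hξ.geom_sum_eq_zero (by norm_num)
  simp only [Finset.sum_range_succ, Finset.sum_range_zero] at hsum
  linear_combination hsum

lemma conj_eq_of_isPrimitiveRoot_three : conj ξ = -1 - ξ := by
  rw [← sq_eq_of_isPrimitiveRoot_three hξ, ← inv_eq_conj (hξ.norm'_eq_one (by norm_num))]
  exact inv_eq_of_mul_eq_one_right (by rw [← pow_succ', hξ.pow_eq_one])

lemma im_ne_zero_of_isPrimitiveRoot_three : ξ.im ≠ 0 := by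
  intro him
  have hconj : conj ξ = ξ := conj_eq_iff_im.2 him
  have hlin : 2 * ξ = -1 := by
    linear_combination conj_eq_of_isPrimitiveRoot_three hξ - hconj
  have hsq := sq_eq_of_isPrimitiveRoot_three hξ
  have hthree : (3 : ℂ) = 0 := by linear_combination 4 * hsq - (2 * ξ + 1) * hlin
  norm_num at hthree

lemma one_add_pow_three_of_isPrimitiveRoot_three : (1 + ξ) ^ 3 = -1 := by
  linear_combination (ξ + 2) * sq_eq_of_isPrimitiveRoot_three hξ

lemma one_add_pow_six_of_isPrimitiveRoot_three : (1 + ξ) ^ 6 = 1 := by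
  rw [show 6 = 3 * 2 by rfl, pow_mul, one_add_pow_three_of_isPrimitiveRoot_three hξ, neg_one_sq]

lemma one_add_mul_mem_closure_one_pair :
    ∀ z ∈ AddSubgroup.closure {1, ξ}, (1 + ξ) * z ∈ AddSubgroup.closure {1, ξ} := by
  refine (forall_mem_closure_pair_iff (AddMonoidHom.mulLeft (1 + ξ)) _ _ _).2
    ⟨AddSubgroup.mem_closure_pair.2 ⟨1, 1, ?_⟩, AddSubgroup.mem_closure_pair.2 ⟨-1, 0, ?_⟩⟩
  · simp
  · simp only [AddMonoidHom.coe_mulLeft, neg_smul, one_smul, zero_smul]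
    linear_combination -sq_eq_of_isPrimitiveRoot_three hξ

lemma exists_eq_one_add_pow_of_norm_eq_one {a : ℂ} (ha : a ∈ AddSubgroup.closure {1, ξ})
    (hnorm : ‖a‖ = 1) : ∃ k : Fin 6, a = (1 + ξ) ^ (k : ℕ) := by
  obtain ⟨m, n, rfl⟩ := AddSubgroup.mem_closure_pair.1 ha
  have hsq := sq_eq_of_isPrimitiveRoot_three hξ
  have hcube := one_add_pow_three_of_isPrimitiveRoot_three hξ
  have hform : m ^ 2 - m * n + n ^ 2 = 1 := by
    have h := mul_conj' (m • (1 : ℂ) + n • ξ)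
    rw [hnorm] at h
    simp only [zsmul_eq_mul, map_add, map_mul, map_intCast, map_one,
      conj_eq_of_isPrimitiveRoot_three hξ] at h
    have h' : (m : ℂ) ^ 2 - m * n + n ^ 2 = 1 := by
      push_cast at h
      linear_combination h + n ^ 2 * hsq
    exact_mod_cast h'
  rcases eq_of_sq_sub_mul_add_sq_eq_one hform with
    ⟨rfl, rfl⟩ | ⟨rfl, rfl⟩ | ⟨rfl, rfl⟩ | ⟨rfl, rfl⟩ | ⟨rfl, rfl⟩ | ⟨rfl, rfl⟩
  · exact ⟨0, by simp⟩
  · exact ⟨1, by simp⟩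
  · exact ⟨2, show _ = (1 + ξ) ^ 2 by linear_combination -hsq⟩
  · exact ⟨3, by simp [hcube]⟩
  · exact ⟨4, show _ = (1 + ξ) ^ 4 by linear_combination -(1 + ξ) * hcube⟩
  · exact ⟨5, show _ = (1 + ξ) ^ 5 by linear_combination -(1 + ξ) ^ 2 * hcube + hsq⟩

theorem pointColorGroup_eq_rotations {Γ : AddSubgroup ℂ} (hΓ : Γ ≤ AddSubgroup.closure {1, ξ})
    (hrot : ∀ z ∈ Γ, (1 + ξ) * z ∈ Γ) (hconj : ¬ ∀ z ∈ Γ, conj z ∈ Γ) :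
    pointColorGroup (AddSubgroup.closure {1, ξ}) Γ =
      {g | ∃ k : Fin 6, g = fun z => (1 + ξ) ^ (k : ℕ) * z} := by
  have hsix := one_add_pow_six_of_isPrimitiveRoot_three hξ
  have hΓ_iff := pow_mul_mem_iff (by norm_num) hsix hrot
  have hlattice_iff := pow_mul_mem_iff (by norm_num) hsix (one_add_mul_mem_closure_one_pair hξ)
  ext g
  rw [mem_pointColorGroup_iff hΓ]
  constructor
  · rintro ⟨f, rfl, hf₁, hf₂⟩
    obtain ⟨k, hk⟩ : ∃ k : Fin 6, f 1 = (1 + ξ) ^ (k : ℕ) :=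
      exists_eq_one_add_pow_of_norm_eq_one hξ
        ((hf₁ 1).2 (AddSubgroup.subset_closure (Set.mem_insert _ _))) (by simp)
    obtain ⟨a, rfl | rfl⟩ := linear_isometry_complex f
    · have ha : (a : ℂ) = (1 + ξ) ^ (k : ℕ) := by simpa using hk
      exact ⟨k, funext fun z => by rw [rotation_apply, ha]⟩
    · have ha : (a : ℂ) = (1 + ξ) ^ (k : ℕ) := by simpa using hk
      refine absurd (fun z hz => ?_) hconj
      rw [← hΓ_iff k, ← ha]
      exact (hf₂ z).2 hz
  · rintro ⟨k, rfl⟩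
    have hnorm : ‖(1 + ξ) ^ (k : ℕ)‖ = 1 := by
      rw [norm_pow, norm_eq_one_of_pow_eq_one hsix (by norm_num), one_pow]
    exact ⟨rotation ⟨_, mem_sphere_zero_iff_norm.2 hnorm⟩, rfl, hlattice_iff k, hΓ_iff k⟩

lemma one_add_mul_mem_closure_pair_of_dvd {u v : ℂ} {p₁ p₂ nu nv : ℤ} (hp₂ : p₂ ≠ 0)
    (hp : u * conj v = p₁ + p₂ * ξ) (hnu : u * conj u = (nu : ℂ)) (hnv : v * conj v = (nv : ℂ))
    (hdvd : p₂ ∣ nu ∧ p₂ ∣ nv ∧ p₂ ∣ p₁) :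
    ∀ z ∈ AddSubgroup.closure {u, v}, (1 + ξ) * z ∈ AddSubgroup.closure {u, v} := by
  have hξ_im := im_ne_zero_of_isPrimitiveRoot_three hξ
  have hsq := sq_eq_of_isPrimitiveRoot_three hξ
  have hp_im : (u * conj v).im = p₂ * ξ.im := by simp [hp]
  have hp_conj : v * conj u = p₁ + p₂ * (-1 - ξ) := by
    rw [← conj_eq_of_isPrimitiveRoot_three hξ, ← conj_conj v, ← map_mul, mul_comm, hp]
    simp
  have him {w : ℂ} {k l : ℤ} (hw : w = l + k * ξ) : w.im = k * ξ.im := by simp [hw]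
  have hu : (1 + ξ) * u ∈ AddSubgroup.closure {u, v} := by
    refine (mem_closure_pair_iff_dvd hξ_im hp₂ hp_im (k := p₁) (l := nu)
      (him (l := p₁ - p₂) ?_) (him (l := nu) ?_)).2 ⟨hdvd.2.2, hdvd.1⟩
    · push_cast
      linear_combination (1 + ξ) * hp + p₂ * hsq
    · linear_combination (1 + ξ) * hnu
  have hv : (1 + ξ) * v ∈ AddSubgroup.closure {u, v} := by
    refine (mem_closure_pair_iff_dvd hξ_im hp₂ hp_im (k := nv) (l := p₁ - p₂)
      (him (l := nv) ?_) (him (l := p₁) ?_)).2 ⟨hdvd.2.1, dvd_sub_self_right.2 hdvd.2.2⟩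
    · linear_combination (1 + ξ) * hnv
    · push_cast
      linear_combination (1 + ξ) * hp_conj - p₂ * hsq
  exact (forall_mem_closure_pair_iff (AddMonoidHom.mulLeft (1 + ξ)) _ _ _).2 ⟨hu, hv⟩

end CubeRoot

theorem pointColorGroup_p6_general {ξ ζ u v : ℂ} {a₁ a₂ b₁ b₂ p₁ p₂ nu nv q₁ q₂ r₁ r₂ s₁ s₂ : ℤ}
    (hζ : IsPrimitiveRoot ζ 6) (hξ : ξ = ζ ^ 2) (hu : u = a₁ + a₂ * ξ) (hv : v = b₁ + b₂ * ξ)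
    (hp : u * conj v = p₁ + p₂ * ξ) (hnu : u * conj u = (nu : ℂ)) (hnv : v * conj v = (nv : ℂ))
    (hq : u ^ 2 = q₁ + q₂ * ξ) (hr : v ^ 2 = r₁ + r₂ * ξ) (hs : u * v = s₁ + s₂ * ξ)
    (hdvd : p₂ ∣ nu ∧ p₂ ∣ nv ∧ p₂ ∣ p₁) (hndvd : ¬ (p₂ ∣ q₂ ∧ p₂ ∣ r₂ ∧ p₂ ∣ s₂)) :
    pointColorGroup (AddSubgroup.closure {1, ξ}) (AddSubgroup.closure {u, v}) =
      {g | ∃ k : Fin 6, g = fun z => ζ ^ (k : ℕ) * z} := by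
  have hξ₃ : IsPrimitiveRoot ξ 3 := hξ ▸ hζ.pow (by norm_num) (by rfl)
  have hξ_im := im_ne_zero_of_isPrimitiveRoot_three hξ₃
  obtain rfl : ζ = 1 + ξ := hξ ▸ eq_one_add_sq_of_isPrimitiveRoot_six hζ
  have hq_im : (u ^ 2).im = q₂ * ξ.im := by simp [hq]
  have hr_im : (v ^ 2).im = r₂ * ξ.im := by simp [hr]
  have hs_im : (u * v).im = s₂ * ξ.im := by simp [hs]
  have hp₂ : p₂ ≠ 0 := by
    rintro rfl
    obtain ⟨rfl, rfl, -⟩ : nu = 0 ∧ nv = 0 ∧ p₁ = 0 := by simpa using hdvd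
    obtain rfl : u = 0 := by simpa using hnu
    obtain rfl : v = 0 := by simpa using hnv
    refine hndvd ⟨?_, ?_, ?_⟩
    · simpa [hξ_im, eq_comm] using hq_im
    · simpa [hξ_im, eq_comm] using hr_im
    · simpa [hξ_im, eq_comm] using hs_im
  have hle : AddSubgroup.closure {u, v} ≤ AddSubgroup.closure {1, ξ} := by
    rw [AddSubgroup.closure_le, Set.pair_subset_iff]
    exact ⟨AddSubgroup.mem_closure_pair.2 ⟨a₁, a₂, by simp [hu]⟩,
      AddSubgroup.mem_closure_pair.2 ⟨b₁, b₂, by simp [hv]⟩⟩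
  refine pointColorGroup_eq_rotations hξ₃ hle
    (one_add_mul_mem_closure_pair_of_dvd hξ₃ hp₂ hp hnu hnv hdvd) ?_
  rwa [forall_conj_mem_closure_pair_iff_dvd hξ_im hp₂ (by simp [hp]) hq_im hr_im hs_im]

/-- Case (b) for the hexagonal lattice `Γ₁ = ℤ[ξ]`, `ξ = e^{2πi/3}`: if
`Im_h(u·conj v)` divides all of `N(u)`, `N(v)`, `Re_h(u·conj v)` but none of
`Im_h(u²)`, `Im_h(v²)`, `Im_h(uv)`, then the point group of the color group of the
coloring of `Γ₁` determined by `Γ₂ = ⟨u, v⟩_ℤ` is the cyclic group of order `6`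
generated by the `60°`-rotation `z ↦ e^{iπ/3} z` (type `p6`). -/
theorem pointColorGroup_p6 (ξ ζ : ℂ)
    (hξ : ξ = Complex.exp (2 * (Real.pi : ℂ) * I / 3))
    (hζ : ζ = Complex.exp ((Real.pi : ℂ) * I / 3))
    (u v : ℂ) (a₁ a₂ b₁ b₂ : ℤ)
    (hu : u = a₁ + a₂ * ξ) (hv : v = b₁ + b₂ * ξ)
    (hind : LinearIndependent ℝ ![u, v])
    (Γ₁ Γ₂ : AddSubgroup ℂ)
    (hΓ₁ : Γ₁ = AddSubgroup.closure ({1, ξ} : Set ℂ))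
    (hΓ₂ : Γ₂ = AddSubgroup.closure ({u, v} : Set ℂ))
    (p₁ p₂ nu nv q₁ q₂ r₁ r₂ s₁ s₂ : ℤ)
    (hp : u * starRingEnd ℂ v = p₁ + p₂ * ξ)
    (hnu : u * starRingEnd ℂ u = (nu : ℂ))
    (hnv : v * starRingEnd ℂ v = (nv : ℂ))
    (hq : u ^ 2 = q₁ + q₂ * ξ)
    (hr : v ^ 2 = r₁ + r₂ * ξ)
    (hs : u * v = s₁ + s₂ * ξ)
    (hdvd : p₂ ∣ nu ∧ p₂ ∣ nv ∧ p₂ ∣ p₁)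
    (hndvd : ¬ p₂ ∣ q₂ ∧ ¬ p₂ ∣ r₂ ∧ ¬ p₂ ∣ s₂) :
    pointColorGroup Γ₁ Γ₂ = {g | ∃ k : Fin 6, g = fun z => ζ ^ (k : ℕ) * z} := by
  subst hΓ₁ hΓ₂
  exact pointColorGroup_p6_general (hζ ▸ isPrimitiveRoot_exp_pi_mul_I_div_three)
    (by rw [hξ, hζ, exp_pi_mul_I_div_three_sq]) hu hv hp hnu hnv hq hr hs hdvd
    fun h => hndvd.1 h.1
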